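/- arXiv:2407.13114 — 3 statements merged into one kernel-verified Lean document; each statement's English description precedes it below -/
import Mathlib

section
/- For infinitely many N ∈ ℕ, the discrepancy of the Champernowne constant satisfies D(c, N) > 1/(3·10³·log N). -/
open scoped Classical

/-- The `i`-th decimal digit (for `i ≥ 1`) of a real number `α`, using the floor
convention, which for numbers admitting two decimal expansions selects the
expansion ending in a tail of `0`s. -/
noncomputable def digit (α : ℝ) (i : ℕ) : ℕ := (⌊α * 10 ^ i⌋ % 10).toNat

/-- Number of occurrences of the digit block `B` (of length `k`) as consecutive
digits among the first `N` decimal digits of `α`: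
`occ α B N = #{i : 1 ≤ i ≤ N - k + 1 ∧ (α_i, …, α_{i+k-1}) = B}`. -/
noncomputable def occ {k : ℕ} (α : ℝ) (B : Fin k → Fin 10) (N : ℕ) : ℕ :=
  ((Finset.Icc 1 N).filter fun i =>
    i + k ≤ N + 1 ∧ ∀ j : Fin k, digit α (i + (j : ℕ)) = (B j : ℕ)).card

/-- Discrepancy of the first `N` terms of a sequence `(x_n)_{n ≥ 1}` of points of `[0,1)`:
the supremum over `0 ≤ a < b < 1` of `|#{n ≤ N : x n ∈ [a,b)}/N - (b - a)|`. -/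
noncomputable def discSeq (x : ℕ → ℝ) (N : ℕ) : ℝ :=
  sSup {d : ℝ | ∃ a b : ℝ, 0 ≤ a ∧ a < b ∧ b < 1 ∧
    d = |(((Finset.Icc 1 N).filter fun n => x n ∈ Set.Ico a b).card : ℝ) / N - (b - a)|}

/-- Discrepancy of a real number for base 10: the discrepancy of the sequence
`(10^(n-1) α mod 1)_{n ≥ 1}`. -/
noncomputable def D (α : ℝ) (N : ℕ) : ℝ :=
  discSeq (fun n => Int.fract (10 ^ (n - 1) * α)) N

/-- `T v` is the total number of digits in the concatenation of the decimal
representations of `1, 2, …, v`. -/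
def T (v : ℕ) : ℕ := ∑ j ∈ Finset.Icc 1 v, (Nat.digits 10 j).length

/-- The Champernowne constant `c = 0.123456789101112…`, the concatenation of the
positive integers in base 10: the term `m` ends at decimal position `T m`. -/
noncomputable def champ : ℝ := ∑' m : ℕ, (m : ℝ) / 10 ^ T m

/-- `vOf N` is the least `v` with `T v ≥ N` (the term of the concatenation
containing the `N`-th digit). -/
noncomputable def vOf (N : ℕ) : ℕ := sInf {v | N ≤ T v}

/-- `nOf N` is the number of decimal digits of `vOf N`. -/
noncomputable def nOf (N : ℕ) : ℕ := (Nat.digits 10 (vOf N)).length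

/-- Number of non-overlapping occurrences of the block `B` (length `k`) in the string
`s_ℓ` (the concatenation of all `ℓ`-digit integers in increasing order): the number of
pairs `(y, j)` with `10^(ℓ-1) ≤ y < 10^ℓ`, `1 ≤ j ≤ ℓ - k + 1`, such that the digits of
`y` in positions `j, …, j + k - 1` (counted from the left) equal `B`. -/
def occNoSeg {k : ℕ} (B : Fin k → Fin 10) (ℓ : ℕ) : ℕ :=
  ((Finset.Ico (10 ^ (ℓ - 1)) (10 ^ ℓ) ×ˢ Finset.Icc 1 (ℓ - k + 1)).filter fun p =>
    ∀ i : Fin k, p.1 / 10 ^ (ℓ - (p.2 + (i : ℕ))) % 10 = (B i : ℕ)).card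

/-- Number of occurrences of the block `B` (length `k ≤ ℓ`) in the string `s_ℓ` that
straddle the boundary between two consecutive `ℓ`-digit terms `y` and `y + 1`:
the number of pairs `(y, j)` with `10^(ℓ-1) ≤ y < 10^ℓ - 1` and `1 ≤ j ≤ k - 1` such
that the last `j` digits of `y` are `(b₁, …, b_j)` and the first `k - j` digits of
`y + 1` are `(b_{j+1}, …, b_k)`. -/
def occOSeg {k : ℕ} (B : Fin k → Fin 10) (ℓ : ℕ) : ℕ :=
  ((Finset.Ico (10 ^ (ℓ - 1)) (10 ^ ℓ - 1) ×ˢ Finset.Ico 1 k).filter fun p =>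
    (∀ i : Fin k, (i : ℕ) < p.2 → p.1 / 10 ^ (p.2 - 1 - (i : ℕ)) % 10 = (B i : ℕ)) ∧
    (∀ i : Fin k, p.2 ≤ (i : ℕ) →
      (p.1 + 1) / 10 ^ (ℓ - 1 - ((i : ℕ) - p.2)) % 10 = (B i : ℕ))).card

/-!
Among the numbers below `10 ^ k`, padded to `k` digits, the digit `1` fills exactly
`k * 10 ^ (k - 1)` of the `k * 10 ^ k` places. The Champernowne expansion does not write the
leading zeros, which are `1 + 10 + ⋯ + 10 ^ (k - 1)` of these places, so the digit `1` is
over-represented among its first `N = T (10 ^ k - 1)` digits: its frequency exceeds `1 / 10` by at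
least `1 / (100 * k)`, and `k` is of order `log N`.
-/

section

open Finset

lemma card_filter_div_mod_eq {b d : ℕ} (hd : d < b) (c m : ℕ) :
    #{v ∈ range (c * b * m) | v / c % b = d} = c * m := by
  obtain rfl | hc := c.eq_zero_or_pos
  · simp
  have hdiv {r q : ℕ} (hr : r < c) : (r + c * (d + b * q)) / c = d + b * q := by
    simp [Nat.add_mul_div_left _ _ hc, Nat.div_eq_of_lt hr]
  have hb : 0 < b := by omega
  have hcard : #(range c ×ˢ range m) = c * m := by simp
  rw [← hcard]
  refine card_nbij' (fun v => (v % c, v / c / b)) (fun p => p.1 + c * (d + b * p.2)) ?_ ?_ ?_ ?_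
  · intro v hv
    have hv : v < c * b * m ∧ v / c % b = d := by simpa using hv
    simpa [Nat.div_div_eq_div_mul] using ⟨Nat.mod_lt v hc, Nat.div_lt_of_lt_mul hv.1⟩
  · rintro ⟨r, q⟩ hp
    obtain ⟨hr, hq⟩ : r < c ∧ q < m := by simpa using hp
    have hlt : r + c * (d + b * q) < c * b * m :=
      calc r + c * (d + b * q) < c * (d + b * q + 1) := by rw [mul_add_one]; omega
        _ ≤ c * (b * (q + 1)) := by gcongr; rw [mul_add_one]; omega
        _ ≤ c * (b * m) := by gcongr; omega
        _ = c * b * m := (mul_assoc ..).symm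
    simpa [hdiv hr, Nat.mod_eq_of_lt hd] using hlt
  · intro v hv
    have hv : v < c * b * m ∧ v / c % b = d := by simpa using hv
    simp only [← hv.2, Nat.mod_add_div]
  · rintro ⟨r, q⟩ hp
    obtain ⟨hr, -⟩ : r < c ∧ q < m := by simpa using hp
    simp [hdiv hr, Nat.mod_eq_of_lt hr, Nat.add_mul_div_left _ _ hb, Nat.div_eq_of_lt hd]

lemma card_sigma_filter_div_pow_mod_eq {b d : ℕ} (hd : d < b) (k : ℕ) :
    #((range (k + 1)).sigma fun i => {v ∈ range (b ^ (k + 1)) | v / b ^ i % b = d}) =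
      (k + 1) * b ^ k := by
  have hcard : ∀ i ∈ range (k + 1), #{v ∈ range (b ^ (k + 1)) | v / b ^ i % b = d} = b ^ k := by
    intro i hi
    obtain ⟨j, rfl⟩ := Nat.exists_eq_add_of_le (mem_range_succ_iff.1 hi)
    rw [show b ^ (i + j + 1) = b ^ i * b * b ^ j by ring, card_filter_div_mod_eq hd, pow_add]
  rw [card_sigma, sum_congr rfl hcard, sum_const, card_range, smul_eq_mul]

lemma digit_succ (α : ℝ) (n : ℕ) : digit α (n + 1) = ⌊Int.fract (10 ^ n * α) * 10⌋₊ := by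
  have hlt : ⌊Int.fract (10 ^ n * α) * 10⌋ < 10 :=
    Int.floor_lt.2 (by push_cast; linarith [Int.fract_lt_one (10 ^ n * α)])
  have hnonneg : 0 ≤ ⌊Int.fract (10 ^ n * α) * 10⌋ :=
    Int.floor_nonneg.2 (by positivity)
  have hfloor : ⌊α * 10 ^ (n + 1)⌋ = ⌊Int.fract (10 ^ n * α) * 10⌋ + ⌊10 ^ n * α⌋ * 10 := by
    rw [← Int.floor_add_intCast, Int.fract]
    push_cast
    ring_nf
  rw [digit, hfloor, Int.add_mul_emod_self_right, Int.emod_eq_of_lt hnonneg hlt, Int.floor_toNat]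

lemma digit_sub (α : ℝ) {i n : ℕ} (hi : i ≤ n) :
    digit α (n - i) = (⌊α * 10 ^ n⌋ / 10 ^ i % 10).toNat := by
  have hpow : α * 10 ^ (n - i) = α * 10 ^ n / (10 ^ i : ℕ) := by
    rw [pow_sub₀ _ (by norm_num) hi]
    push_cast
    ring
  rw [digit, hpow, Int.floor_div_natCast]
  push_cast
  rfl

lemma fract_mem_Ico_iff_digit_eq (α : ℝ) {n : ℕ} (hn : 1 ≤ n) (d : ℕ) :
    Int.fract (10 ^ (n - 1) * α) ∈ Set.Ico ((d : ℝ) / 10) ((d + 1) / 10) ↔ digit α n = d := by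
  obtain ⟨n, rfl⟩ := Nat.exists_eq_add_of_le' hn
  rw [digit_succ, Nat.floor_eq_iff (by positivity), Set.mem_Ico, div_le_iff₀ (by norm_num),
    lt_div_iff₀ (by norm_num), Nat.add_sub_cancel]

lemma abs_card_div_sub_le_discSeq (x : ℕ → ℝ) (N : ℕ) {a b : ℝ}
    (ha : 0 ≤ a) (hab : a < b) (hb : b < 1) :
    |(#{n ∈ Icc 1 N | x n ∈ Set.Ico a b} : ℝ) / N - (b - a)| ≤ discSeq x N := by
  refine le_csSup ⟨1, ?_⟩ ⟨a, b, ha, hab, hb, rfl⟩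
  rintro _ ⟨a, b, ha, hab, hb, rfl⟩
  have hcard : #{n ∈ Icc 1 N | x n ∈ Set.Ico a b} ≤ N := by
    simpa using card_filter_le (Icc 1 N) fun n => x n ∈ Set.Ico a b
  have hnonneg : 0 ≤ (#{n ∈ Icc 1 N | x n ∈ Set.Ico a b} : ℝ) / N := by positivity
  have hle_one : (#{n ∈ Icc 1 N | x n ∈ Set.Ico a b} : ℝ) / N ≤ 1 :=
    div_le_one_of_le₀ (by exact_mod_cast hcard) (by positivity)
  rw [abs_le]
  constructor <;> linarith

lemma abs_card_digit_div_sub_le_D (α : ℝ) (N : ℕ) {d : ℕ} (hd : d < 9) :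
    |(#{n ∈ Icc 1 N | digit α n = d} : ℝ) / N - 1 / 10| ≤ D α N := by
  have hd' : (d : ℝ) + 1 < 10 := by exact_mod_cast (by omega : d + 1 < 10)
  have hdisc := abs_card_div_sub_le_discSeq (fun n => Int.fract (10 ^ (n - 1) * α)) N
    (a := d / 10) (b := (d + 1) / 10) (by positivity) (by linarith) (by linarith)
  have hcongr :
      {n ∈ Icc 1 N | Int.fract (10 ^ (n - 1) * α) ∈ Set.Ico ((d : ℝ) / 10) ((d + 1) / 10)} =
        {n ∈ Icc 1 N | digit α n = d} :=
    filter_congr fun n hn => fract_mem_Ico_iff_digit_eq α (mem_Icc.1 hn).1 d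
  rwa [hcongr, show ((d : ℝ) + 1) / 10 - d / 10 = 1 / 10 by ring] at hdisc

lemma T_succ (v : ℕ) : T (v + 1) = T v + (Nat.digits 10 (v + 1)).length :=
  sum_Icc_succ_top (by omega) _

lemma T_mono : Monotone T := monotone_nat_of_le_succ fun v => by
  rw [T_succ]
  omega

lemma le_T (v : ℕ) : v ≤ T v := by
  have hlen : ∀ j ∈ Icc 1 v, 1 ≤ (Nat.digits 10 j).length := fun j hj =>
    (Nat.lt_digits_length_iff (by norm_num) j).2 (by simpa using (mem_Icc.1 hj).1)
  simpa [T] using card_nsmul_le_sum (Icc 1 v) _ 1 hlen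

lemma length_digits_le_T (v : ℕ) : (Nat.digits 10 v).length ≤ T v := by
  cases v with
  | zero => simp
  | succ v =>
    rw [T_succ]
    omega

lemma T_sub_lt_T_sub {v w j : ℕ} (hvw : v < w) (hj : j < (Nat.digits 10 w).length) (i : ℕ) :
    T v - i < T w - j := by
  obtain ⟨u, rfl⟩ := Nat.exists_eq_add_of_lt hvw
  have hle := T_mono (Nat.le_add_right v u)
  rw [T_succ]
  omega

lemma T_sub_eq_T_sub_iff {v w i j : ℕ} (hi : i < (Nat.digits 10 v).length)
    (hj : j < (Nat.digits 10 w).length) : T v - i = T w - j ↔ v = w ∧ i = j := by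
  refine ⟨fun h => ?_, by rintro ⟨rfl, rfl⟩; rfl⟩
  obtain hvw | rfl | hwv := lt_trichotomy v w
  · exact absurd h (T_sub_lt_T_sub hvw hj i).ne
  · have hlen := length_digits_le_T v
    exact ⟨rfl, by omega⟩
  · exact absurd h (T_sub_lt_T_sub hwv hi j).ne'

lemma T_ten_pow_succ_sub_one (k : ℕ) :
    T (10 ^ (k + 1) - 1) = T (10 ^ k - 1) + 9 * 10 ^ k * (k + 1) := by
  have hT (n : ℕ) : T (n - 1) = ∑ j ∈ Ico 1 n, (Nat.digits 10 j).length :=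
    sum_congr (by ext j; simp only [mem_Icc, mem_Ico]; omega) fun _ _ => rfl
  have hlen : ∀ j ∈ Ico (10 ^ k) (10 ^ (k + 1)), (Nat.digits 10 j).length = k + 1 := by
    intro j hj
    obtain ⟨hle, hlt⟩ := mem_Ico.1 hj
    exact le_antisymm ((Nat.digits_length_le_iff (by norm_num) j).2 hlt)
      ((Nat.lt_digits_length_iff (by norm_num) j).2 hle)
  have hle : 10 ^ k ≤ 10 ^ (k + 1) := Nat.pow_le_pow_right (by norm_num) k.le_succ
  have hcard : #(Ico (10 ^ k) (10 ^ (k + 1))) = 9 * 10 ^ k := by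
    rw [Nat.card_Ico, pow_succ]
    omega
  rw [hT, hT, ← sum_Ico_consecutive _ (Nat.one_le_pow' k 9) hle, sum_congr rfl hlen, sum_const,
    hcard, smul_eq_mul]

lemma T_ten_pow_sub_one_add_sum (k : ℕ) :
    T (10 ^ k - 1) + ∑ i ∈ range k, 10 ^ i = k * 10 ^ k := by
  induction k with
  | zero => simp [T]
  | succ k ih =>
    calc T (10 ^ (k + 1) - 1) + ∑ i ∈ range (k + 1), 10 ^ i
        = T (10 ^ k - 1) + ∑ i ∈ range k, 10 ^ i + 9 * 10 ^ k * (k + 1) + 10 ^ k := by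
          rw [T_ten_pow_succ_sub_one, sum_range_succ]
          ring
      _ = (k + 1) * 10 ^ (k + 1) := by
          rw [ih]
          ring

lemma T_ten_pow_succ_sub_one_le (k : ℕ) :
    T (10 ^ (k + 1) - 1) + 10 ^ k ≤ (k + 1) * 10 ^ (k + 1) := by
  rw [← T_ten_pow_sub_one_add_sum, sum_range_succ]
  omega

lemma two_pow_le_T_ten_pow_sub_one {k : ℕ} (hk : k ≠ 0) : 2 ^ k ≤ T (10 ^ k - 1) :=
  (Nat.le_sub_one_of_lt (Nat.pow_lt_pow_left (by norm_num) hk)).trans (le_T _)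

/-- The integer whose decimal representation is the concatenation of those of `1, 2, …, v`; it
gives the first `T v` digits of the Champernowne constant. -/
def concatNat : ℕ → ℕ
  | 0 => 0
  | v + 1 => concatNat v * 10 ^ (Nat.digits 10 (v + 1)).length + (v + 1)

lemma concatNat_mod_ten_pow (v : ℕ) : concatNat v % 10 ^ (Nat.digits 10 v).length = v := by
  cases v with
  | zero => simp [concatNat]
  | succ v =>
    rw [concatNat, Nat.mul_add_mod', Nat.mod_eq_of_lt (Nat.lt_base_pow_length_digits (by norm_num))]

lemma concatNat_div_ten_pow_mod_ten {v i : ℕ} (hi : i < (Nat.digits 10 v).length) :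
    concatNat v / 10 ^ i % 10 = v / 10 ^ i % 10 := by
  obtain ⟨r, hr⟩ := Nat.exists_eq_add_of_lt hi
  have hpow : 10 ^ (Nat.digits 10 v).length = 10 ^ i * (10 * 10 ^ r) := by
    rw [hr]
    ring
  have hmod := concatNat_mod_ten_pow v
  rw [hpow] at hmod
  conv_rhs => rw [← hmod]
  rw [Nat.mod_mul_right_div_self, Nat.mod_mul_right_mod]

lemma sum_range_div_ten_pow_T (v : ℕ) :
    ∑ m ∈ range (v + 1), (m : ℝ) / 10 ^ T m = concatNat v / 10 ^ T v := by
  induction v with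
  | zero => simp [concatNat]
  | succ v ih =>
    rw [sum_range_succ, ih, T_succ, concatNat, pow_add]
    push_cast
    field_simp

lemma concatNat_add_one_div_succ (v : ℕ) :
    ((concatNat (v + 1) : ℝ) + 1) / 10 ^ T (v + 1) = (concatNat v + 1) / 10 ^ T v -
      (10 ^ (Nat.digits 10 (v + 1)).length - (v + 2)) / 10 ^ T (v + 1) := by
  rw [T_succ, concatNat, pow_add]
  push_cast
  field_simp
  ring

lemma add_two_le_ten_pow_length_digits (v : ℕ) : v + 2 ≤ 10 ^ (Nat.digits 10 (v + 1)).length :=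
  Nat.lt_base_pow_length_digits (by norm_num)

lemma antitone_concatNat_add_one_div :
    Antitone fun v => ((concatNat v : ℝ) + 1) / 10 ^ T v := by
  refine antitone_nat_of_succ_le fun v => ?_
  have hlen : (v : ℝ) + 2 ≤ 10 ^ (Nat.digits 10 (v + 1)).length := by
    exact_mod_cast add_two_le_ten_pow_length_digits v
  rw [concatNat_add_one_div_succ]
  exact sub_le_self _ (div_nonneg (sub_nonneg.2 hlen) (by positivity))

lemma concatNat_add_one_div_succ_lt {v : ℕ} (hv : v + 2 ≠ 10 ^ (Nat.digits 10 (v + 1)).length) :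
    ((concatNat (v + 1) : ℝ) + 1) / 10 ^ T (v + 1) < (concatNat v + 1) / 10 ^ T v := by
  have hlen : (v : ℝ) + 2 < 10 ^ (Nat.digits 10 (v + 1)).length := by
    exact_mod_cast lt_of_le_of_ne (add_two_le_ten_pow_length_digits v) hv
  rw [concatNat_add_one_div_succ]
  exact sub_lt_self _ (div_pos (sub_pos.2 hlen) (by positivity))

lemma ten_dvd_ten_pow_length_digits_succ (v : ℕ) : 10 ∣ 10 ^ (Nat.digits 10 (v + 1)).length :=
  dvd_pow_self 10 (by simp [Nat.digits_eq_nil_iff_eq_zero])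

lemma concatNat_add_one_div_add_two_lt (v : ℕ) :
    ((concatNat (v + 2) : ℝ) + 1) / 10 ^ T (v + 2) < (concatNat v + 1) / 10 ^ T v := by
  -- Two consecutive integers are not both divisible by `10`, so one of the two steps is strict.
  by_cases hv : v + 2 = 10 ^ (Nat.digits 10 (v + 1)).length
  · have hdvd := ten_dvd_ten_pow_length_digits_succ v
    have hdvd' := ten_dvd_ten_pow_length_digits_succ (v + 1)
    exact (concatNat_add_one_div_succ_lt (v := v + 1) (by omega)).trans_le
      (antitone_concatNat_add_one_div v.le_succ)
  · exact (antitone_concatNat_add_one_div (v + 1).le_succ).trans_lt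
      (concatNat_add_one_div_succ_lt hv)

lemma sum_range_div_ten_pow_T_le (v n : ℕ) :
    ∑ m ∈ range n, (m : ℝ) / 10 ^ T m ≤ (concatNat v + 1) / 10 ^ T v := by
  calc ∑ m ∈ range n, (m : ℝ) / 10 ^ T m
      ≤ ∑ m ∈ range (max n v + 1), (m : ℝ) / 10 ^ T m :=
        sum_le_sum_of_subset_of_nonneg (range_mono (by omega)) fun _ _ _ => by positivity
    _ = concatNat (max n v) / 10 ^ T (max n v) := sum_range_div_ten_pow_T _
    _ ≤ (concatNat (max n v) + 1) / 10 ^ T (max n v) := by gcongr; linarith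
    _ ≤ (concatNat v + 1) / 10 ^ T v := antitone_concatNat_add_one_div (le_max_right n v)

lemma concatNat_div_le_champ (v : ℕ) : concatNat v / 10 ^ T v ≤ champ := by
  have hsummable : Summable fun m : ℕ => (m : ℝ) / 10 ^ T m :=
    summable_of_sum_range_le (fun _ => by positivity) (sum_range_div_ten_pow_T_le 0)
  rw [← sum_range_div_ten_pow_T]
  exact hsummable.sum_le_tsum _ fun _ _ => by positivity

lemma champ_lt_concatNat_add_one_div (v : ℕ) : champ < (concatNat v + 1) / 10 ^ T v :=
  (Real.tsum_le_of_sum_range_le (fun _ => by positivity)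
    (sum_range_div_ten_pow_T_le (v + 2))).trans_lt (concatNat_add_one_div_add_two_lt v)

lemma floor_champ_mul_ten_pow_T (v : ℕ) : ⌊champ * 10 ^ T v⌋ = concatNat v := by
  rw [Int.floor_eq_iff, Int.cast_natCast]
  exact ⟨(div_le_iff₀ (by positivity)).1 (concatNat_div_le_champ v),
    (lt_div_iff₀ (by positivity)).1 (champ_lt_concatNat_add_one_div v)⟩

lemma digit_champ_T_sub {v i : ℕ} (hi : i < (Nat.digits 10 v).length) :
    digit champ (T v - i) = v / 10 ^ i % 10 := by
  rw [digit_sub champ (hi.le.trans (length_digits_le_T v)), floor_champ_mul_ten_pow_T,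
    ← concatNat_div_ten_pow_mod_ten hi]
  norm_cast

lemma le_card_digit_champ_eq {d : ℕ} (hd0 : d ≠ 0) (hd : d < 10) (k : ℕ) :
    (k + 1) * 10 ^ k ≤ #{n ∈ Icc 1 (T (10 ^ (k + 1) - 1)) | digit champ n = d} := by
  -- Since `d ≠ 0`, a place where `v` has the digit `d` is not among the unwritten leading zeros.
  have hlen {i v : ℕ} (hv : v / 10 ^ i % 10 = d) : i < (Nat.digits 10 v).length := by
    have hdiv : v / 10 ^ i ≠ 0 := by omega
    exact (Nat.lt_digits_length_iff (by norm_num) v).2 (Nat.div_ne_zero_iff.1 hdiv).2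
  rw [← card_sigma_filter_div_pow_mod_eq hd k]
  refine card_le_card_of_injOn (fun p => T p.2 - p.1) ?_ ?_
  · rintro ⟨i, v⟩ hp
    obtain ⟨-, hv, hdv⟩ : i < k + 1 ∧ v < 10 ^ (k + 1) ∧ v / 10 ^ i % 10 = d := by
      simpa using hp
    have hi := hlen hdv
    have hlow := length_digits_le_T v
    have hupp := T_mono (Nat.le_sub_one_of_lt hv)
    simp only [coe_filter, mem_Icc]
    exact ⟨⟨by omega, by omega⟩, (digit_champ_T_sub hi).trans hdv⟩
  · rintro ⟨i, v⟩ hp ⟨j, w⟩ hq h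
    have hi : i < (Nat.digits 10 v).length := hlen (mem_filter.1 (mem_sigma.1 hp).2).2
    have hj : j < (Nat.digits 10 w).length := hlen (mem_filter.1 (mem_sigma.1 hq).2).2
    obtain ⟨rfl, rfl⟩ := (T_sub_eq_T_sub_iff hi hj).1 h
    rfl

lemma one_div_le_D_champ (k : ℕ) :
    1 / (100 * (k + 1)) ≤ D champ (T (10 ^ (k + 1) - 1)) := by
  set N := T (10 ^ (k + 1) - 1)
  have hN : (0 : ℝ) < N := by
    exact_mod_cast (Nat.two_pow_pos _).trans_le (two_pow_le_T_ten_pow_sub_one k.succ_ne_zero)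
  have hN_le : (N : ℝ) + 10 ^ k ≤ (k + 1) * 10 ^ (k + 1) := by
    exact_mod_cast T_ten_pow_succ_sub_one_le k
  have hcard : ((k : ℝ) + 1) * 10 ^ k ≤ #{n ∈ Icc 1 N | digit champ n = 1} := by
    exact_mod_cast le_card_digit_champ_eq one_ne_zero (by norm_num) k
  calc (1 : ℝ) / (100 * (k + 1)) = 10 ^ k / (10 * ((k + 1) * 10 ^ (k + 1))) := by
        field_simp
        ring
    _ ≤ 10 ^ k / (10 * N) := by
        gcongr
        linarith [pow_pos (show (0 : ℝ) < 10 by norm_num) k]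
    _ ≤ ((k + 1) * 10 ^ (k + 1) - N) / (10 * N) := by
        gcongr
        linarith
    _ = (k + 1) * 10 ^ k / N - 1 / 10 := by
        field_simp
        ring
    _ ≤ #{n ∈ Icc 1 N | digit champ n = 1} / N - 1 / 10 := by gcongr
    _ ≤ D champ N := (le_abs_self _).trans (abs_card_digit_div_sub_le_D champ N (by norm_num))

end

/-- For infinitely many `N`, the discrepancy of the Champernowne constant satisfies
`D(c, N) > 1 / (3 · 10³ · log N)`. -/
theorem champernowne_discrepancy_lower :
    ∀ m : ℕ, ∃ N : ℕ, m ≤ N ∧ D champ N > 1 / (3 * 10 ^ 3 * Real.log N) := by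
  intro m
  have hN : 2 ^ (m + 1) ≤ T (10 ^ (m + 1) - 1) := two_pow_le_T_ten_pow_sub_one m.succ_ne_zero
  have hlog : (m + 1) * Real.log 2 ≤ Real.log (T (10 ^ (m + 1) - 1)) := by
    exact_mod_cast Real.le_log_of_pow_le two_pos (by exact_mod_cast hN)
  refine ⟨T (10 ^ (m + 1) - 1), ?_, lt_of_lt_of_le ?_ (one_div_le_D_champ m)⟩
  · exact (m.le_succ.trans Nat.lt_two_pow_self.le).trans hN
  · refine one_div_lt_one_div_of_lt (by positivity) ?_
    nlinarith [Real.log_two_gt_d9, m.cast_nonneg (α := ℝ)]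
end

section
/- Let k ≥ 2 and let B = (b₁,…,b_k) be a digit block with b₂ ≠ 0 and b₁ ≠ 9. Then for every ℓ ≥ k, occ_o(B, s_ℓ) ≥ 10^{ℓ−k}: for each of the 10^{ℓ−k} integers m with ℓ digits whose first k−1 digits are (b₂,…,b_k) and whose last digit is b₁, the block B occurs straddling the boundary between m and m+1 in the string s_ℓ. -/
open scoped Classical

/-!
It suffices to count the occurrences of `B` across a boundary `m | m + 1` whose first digit `b₁` is
the last digit of `m`. As `b₁ ≠ 9`, adding one to `m` causes no carry, so `m + 1` starts with
`b₂, …, b_k` as soon as `m` does, and as `b₂ ≠ 0`, such an `m` is a genuine `ℓ`-digit term. The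
remaining `ℓ - k` digits of `m` are free.
-/

/-- The natural number whose base-`b` digits are `c 0, c 1, …`, most significant first (whereas
`finFunctionFinEquiv` reads the least significant digit first). It describes the leading digits of
a term. -/
def blockValue {b n : ℕ} (c : Fin n → Fin b) : ℕ :=
  finFunctionFinEquiv (c ∘ Fin.rev)

theorem blockValue_lt_pow {b n : ℕ} (c : Fin n → Fin b) : blockValue c < b ^ n :=
  (finFunctionFinEquiv (c ∘ Fin.rev)).isLt

theorem blockValue_div_pow_rev_mod {b n : ℕ} (c : Fin n → Fin b) (i : Fin n) :
    blockValue c / b ^ (i.rev : ℕ) % b = c i := by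
  rw [blockValue, ← finFunctionFinEquiv_symm_apply_val, Equiv.symm_apply_apply,
    Function.comp_apply, Fin.rev_rev]

theorem pow_le_blockValue {b n : ℕ} {c : Fin (n + 1) → Fin b} (hc : (c 0 : ℕ) ≠ 0) :
    b ^ n ≤ blockValue c := by
  by_contra! hlt
  have hlead := blockValue_div_pow_rev_mod c 0
  rw [Fin.rev_zero, Fin.val_last, Nat.div_eq_of_lt hlt, Nat.zero_mod] at hlead
  exact hc hlead.symm

theorem succ_div_pow_succ_of_mod_succ_ne {b y : ℕ} (d : ℕ) (hy : y % b + 1 ≠ b) :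
    (y + 1) / b ^ (d + 1) = y / b ^ (d + 1) := by
  have hcarry : ¬ b ∣ y + 1 := by
    obtain _ | b := b
    · simp
    · rwa [Nat.dvd_iff_mod_eq_zero, Nat.succ_mod_succ_eq_zero_iff, ← Nat.succ_inj]
  rw [pow_succ', ← Nat.div_div_eq_div_mul, ← Nat.div_div_eq_div_mul,
    Nat.succ_div_of_not_dvd hcarry]

/-- For a digit `r < b`, the natural numbers whose base-`b` expansion is that of `p`, then `d`
arbitrary digits, then `r`. The interval holds the numbers obtained from `p` by appending the `d`
arbitrary digits. -/
def extensionsEndingIn (b p d r : ℕ) : Finset ℕ :=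
  (Finset.Ico (p * b ^ d) ((p + 1) * b ^ d)).image fun u => b * u + r

theorem card_extensionsEndingIn {b : ℕ} (p d r : ℕ) (hb : 0 < b) :
    (extensionsEndingIn b p d r).card = b ^ d := by
  have hinj : Function.Injective fun u => b * u + r := fun u v huv =>
    Nat.eq_of_mul_eq_mul_left hb (Nat.add_right_cancel huv)
  rw [extensionsEndingIn, Finset.card_image_of_injective _ hinj, Nat.card_Ico, ← Nat.sub_mul,
    Nat.add_sub_cancel_left, one_mul]

theorem mem_extensionsEndingIn {b p d r y : ℕ} (hr : r < b) :
    y ∈ extensionsEndingIn b p d r ↔ y / b ^ (d + 1) = p ∧ y % b = r := by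
  have hb : 0 < b := Nat.zero_lt_of_lt hr
  have hmem (u : ℕ) : u ∈ Finset.Ico (p * b ^ d) ((p + 1) * b ^ d) ↔ u / b ^ d = p := by
    rw [Finset.mem_Ico, ← Nat.le_div_iff_mul_le (by positivity),
      ← Nat.div_lt_iff_lt_mul (by positivity)]
    omega
  simp only [extensionsEndingIn, Finset.mem_image, hmem, pow_succ', ← Nat.div_div_eq_div_mul]
  constructor
  · rintro ⟨u, hu, rfl⟩
    rw [Nat.mul_add_div hb, Nat.div_eq_of_lt hr, add_zero, Nat.mul_add_mod_self_left,
      Nat.mod_eq_of_lt hr]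
    exact ⟨hu, rfl⟩
  · rintro ⟨hdiv, rfl⟩
    exact ⟨y / b, hdiv, Nat.div_add_mod y b⟩

/-- The block `c` straddles the boundary between the `ℓ`-digit numbers `y` and `y + 1` in base `b`,
its first digit being the last digit of `y`: the case `j = 1` of the pairs `(y, j)` counted by
`occOSeg`. -/
structure StraddlesAfterFirst {b n : ℕ} (c : Fin (n + 1) → Fin b) (ℓ y : ℕ) : Prop where
  pow_le : b ^ (ℓ - 1) ≤ y
  succ_lt : y + 1 < b ^ ℓ
  last_digit : y % b = c 0
  leading_digits : ∀ i : Fin n, (y + 1) / b ^ (ℓ - 1 - i) % b = c i.succ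

theorem straddlesAfterFirst_of_mem_extensionsEndingIn {b n d y : ℕ} {c : Fin (n + 2) → Fin b}
    (hc₁ : (c 1 : ℕ) ≠ 0) (hc₀ : (c 0 : ℕ) + 1 ≠ b)
    (hy : y ∈ extensionsEndingIn b (blockValue (Fin.tail c)) d (c 0)) :
    StraddlesAfterFirst c (n + 2 + d) y := by
  obtain ⟨hprefix, hlast⟩ := (mem_extensionsEndingIn (c 0).isLt).mp hy
  have hpos : 0 < b ^ (d + 1) := pow_pos (Nat.zero_lt_of_lt (c 0).isLt) _
  have hsucc : (y + 1) / b ^ (d + 1) = blockValue (Fin.tail c) :=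
    (succ_div_pow_succ_of_mod_succ_ne d (hlast ▸ hc₀)).trans hprefix
  refine ⟨?_, ?_, hlast, fun i => ?_⟩
  · rw [show n + 2 + d - 1 = n + (d + 1) by omega, pow_add, ← Nat.le_div_iff_mul_le hpos, hprefix]
    exact pow_le_blockValue hc₁
  · rw [show n + 2 + d = n + 1 + (d + 1) by omega, pow_add, ← Nat.div_lt_iff_lt_mul hpos, hsucc]
    exact blockValue_lt_pow _
  · have hexp : n + 2 + d - 1 - i = d + 1 + i.rev := by
      rw [Fin.val_rev]
      omega
    rw [hexp, pow_add, ← Nat.div_div_eq_div_mul, hsucc, blockValue_div_pow_rev_mod, Fin.tail]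

theorem card_le_occOSeg {n ℓ : ℕ} {B : Fin (n + 2) → Fin 10} {S : Finset ℕ}
    (hS : ∀ y ∈ S, StraddlesAfterFirst B ℓ y) : S.card ≤ occOSeg B ℓ := by
  refine Finset.card_le_card_of_injOn (fun y => (y, 1)) (fun y hy => ?_)
    fun _ _ _ _ h => (Prod.mk.inj h).1
  obtain ⟨hge, hlt, hlast, hlead⟩ := hS y hy
  simp only [Finset.mem_coe, Finset.mem_filter, Finset.mem_product, Finset.mem_Ico]
  refine ⟨⟨⟨hge, by omega⟩, le_rfl, by omega⟩, fun i hi => ?_, fun i hi => ?_⟩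
  · obtain rfl : i = 0 := Fin.ext (Nat.lt_one_iff.mp hi)
    simpa using hlast
  · obtain ⟨i, rfl⟩ := Fin.exists_succ_eq.mpr (Fin.pos_iff_ne_zero.mp hi)
    simpa using hlead i

/-- If `B = (b₁, …, b_k)` has `k ≥ 2`, `b₂ ≠ 0` and `b₁ ≠ 9`, then for every `ℓ ≥ k`
the number of occurrences of `B` in `s_ℓ` straddling a boundary between two
consecutive `ℓ`-digit terms satisfies `occ_o(B, s_ℓ) ≥ 10^{ℓ−k}`. -/
theorem occOSeg_lower (k ℓ : ℕ) (hk : 2 ≤ k) (B : Fin k → Fin 10)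
    (hb₂ : (B ⟨1, by omega⟩ : ℕ) ≠ 0) (hb₁ : (B ⟨0, by omega⟩ : ℕ) ≠ 9)
    (hℓ : k ≤ ℓ) :
    10 ^ (ℓ - k) ≤ occOSeg B ℓ := by
  obtain ⟨n, rfl⟩ := Nat.exists_eq_add_of_le' hk
  obtain ⟨d, rfl⟩ := Nat.exists_eq_add_of_le hℓ
  calc 10 ^ (n + 2 + d - (n + 2))
      = (extensionsEndingIn 10 (blockValue (Fin.tail B)) d (B 0)).card := by
        rw [card_extensionsEndingIn _ _ _ (by norm_num), Nat.add_sub_cancel_left]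
    _ ≤ occOSeg B (n + 2 + d) := card_le_occOSeg fun _ hy =>
        straddlesAfterFirst_of_mem_extensionsEndingIn hb₂ (by simpa using hb₁) hy
end

section
/- There exists a constant C > 0 such that for every h ≥ 1 there is a threshold N₀(h) with the following property: for every γ ∈ [0,1) with 10^h·γ ∈ ℤ and every N ≥ N₀(h), | #{n : 1 ≤ n ≤ N and 10^{n−1}c mod 1 ∈ [0, γ)}/N − γ | ≤ C/log N. In particular the constant C does not depend on γ or on h. -/
open scoped Classical

/-! Let `V` be the last integer written out completely among the first `N` digits, and sort the
digits of `1, …, V` by the number `t` of digits following them within the integer `y` they belong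
to. If the expansion is started at such a digit, then `10 ^ (t + 1)` times the resulting point of
`[0, 1)` has integer part `y % 10 ^ (t + 1)`. As `y` runs through `10 ^ (t + 1)` consecutive
integers, each cell `[k / 10 ^ (t + 1), (k + 1) / 10 ^ (t + 1))` is therefore hit exactly once,
and the number of hits in `[0, γ)` deviates from its expected value by at most `1`. Summing over
the blocks and over `t` gives a total deviation `O(V)`, while `N ≥ T V` is of order `V log V`.
-/

open Finset

section Stratified

/-- The indicator function of `[0, γ)`, centred at its mean. It is only evaluated at points of
`[0, 1)`, so the lower endpoint is left out. -/
noncomputable def centeredIndicator (γ x : ℝ) : ℝ := (Set.Iio γ).indicator 1 x - γ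

variable {γ : ℝ}

lemma norm_centeredIndicator_le_one (hγ : γ ∈ Set.Icc (0 : ℝ) 1) (x : ℝ) :
    ‖centeredIndicator γ x‖ ≤ 1 := by
  obtain ⟨h0, h1⟩ := hγ
  rw [Real.norm_eq_abs, abs_le, centeredIndicator, Set.indicator_apply, Pi.one_apply]
  split_ifs <;> constructor <;> linarith

lemma sum_centeredIndicator_eq_card_sub {ι : Type*} (s : Finset ι) (x : ι → ℝ) :
    ∑ i ∈ s, centeredIndicator γ (x i) = #{i ∈ s | x i < γ} - #s * γ := by
  simp [centeredIndicator, Set.indicator_apply]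

variable {ι : Type*} {s : Finset ι} {m : ℕ} {k : ι → ℕ}

lemma card_filter_lt_of_bijOn_range (hk : Set.BijOn k s (range m)) {K : ℕ} (hK : K ≤ m) :
    #{i ∈ s | k i < K} = K := by
  refine (card_nbij k (t := range K) (fun i hi => ?_) (hk.injOn.mono (filter_subset _ s))
    fun j hj => ?_).trans (card_range K)
  · exact mem_range.2 (mem_filter.1 hi).2
  · have hjK := mem_range.1 hj
    obtain ⟨i, hi, rfl⟩ := hk.surjOn (mem_range.2 (hjK.trans_le hK))
    exact ⟨i, mem_filter.2 ⟨hi, hjK⟩, rfl⟩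

lemma norm_sum_centeredIndicator_le_one_of_bijOn (hγ : γ ∈ Set.Icc (0 : ℝ) 1)
    (hk : Set.BijOn k s (range m)) {x : ι → ℝ} (hx : ∀ i ∈ s, ⌊m * x i⌋ = k i) :
    ‖∑ i ∈ s, centeredIndicator γ (x i)‖ ≤ 1 := by
  obtain ⟨h0, h1⟩ := hγ
  have hmγ : 0 ≤ m * γ := by positivity
  have hmγ' : m * γ ≤ m := mul_le_of_le_one_right m.cast_nonneg h1
  have hcard : #s = m := (card_nbij k hk.mapsTo hk.injOn hk.surjOn).trans (card_range m)
  have hupper : #{i ∈ s | x i < γ} ≤ ⌈m * γ⌉₊ := by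
    rw [← card_filter_lt_of_bijOn_range hk (Nat.ceil_le.2 hmγ')]
    refine card_le_card fun i hi => ?_
    obtain ⟨hi, hxi⟩ := mem_filter.1 hi
    refine mem_filter.2 ⟨hi, ?_⟩
    have hm : 0 < m := (Nat.zero_le _).trans_lt (mem_range.1 (hk.mapsTo hi))
    rw [Nat.lt_ceil]
    calc (k i : ℝ) ≤ m * x i := Int.le_floor.1 (hx i hi).ge
      _ < m * γ := by gcongr
  have hlower : ⌊m * γ⌋₊ ≤ #{i ∈ s | x i < γ} := by
    rw [← card_filter_lt_of_bijOn_range hk (Nat.floor_le_of_le hmγ')]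
    refine card_le_card fun i hi => ?_
    obtain ⟨hi, hki⟩ := mem_filter.1 hi
    refine mem_filter.2 ⟨hi, lt_of_mul_lt_mul_left ?_ m.cast_nonneg⟩
    calc m * x i < k i + 1 := by simpa [hx i hi] using Int.lt_floor_add_one (m * x i)
      _ ≤ ⌊m * γ⌋₊ := mod_cast hki
      _ ≤ m * γ := Nat.floor_le hmγ
  rw [Real.norm_eq_abs, sum_centeredIndicator_eq_card_sub, hcard, abs_le]
  have := Nat.ceil_lt_add_one hmγ
  have := Nat.lt_floor_add_one (m * γ)
  have : (#{i ∈ s | x i < γ} : ℝ) ≤ ⌈m * γ⌉₊ := mod_cast hupper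
  have : (⌊m * γ⌋₊ : ℝ) ≤ #{i ∈ s | x i < γ} := mod_cast hlower
  constructor <;> linarith

end Stratified

lemma bijOn_mod_Ico_range (a m : ℕ) : Set.BijOn (· % m) (Ico a (a + m)) (range m) := by
  rw [← Nat.image_Ico_mod a m, coe_image]
  exact (Nat.mod_injOn_Ico a m).bijOn_image

section BlockSums

variable {E : Type*} [SeminormedAddCommGroup E] {f : ℕ → E} {a m : ℕ} {A B : ℝ}

lemma norm_sum_Ico_add_mul_le_of_norm_block_le
    (hB : ∀ c, a ≤ c → ‖∑ n ∈ Ico c (c + m), f n‖ ≤ B) (q : ℕ) :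
    ‖∑ n ∈ Ico a (a + m * q), f n‖ ≤ q * B := by
  induction q with
  | zero => simp
  | succ q ih =>
    rw [mul_add_one, ← add_assoc, ← sum_Ico_consecutive f le_self_add le_self_add, Nat.cast_succ,
      add_one_mul]
    exact norm_add_le_of_le ih (hB _ le_self_add)

lemma norm_sum_Ico_le_of_norm_block_le (hA : ∀ n, a ≤ n → ‖f n‖ ≤ A)
    (hB : ∀ c, a ≤ c → ‖∑ n ∈ Ico c (c + m), f n‖ ≤ B) (b : ℕ) :
    ‖∑ n ∈ Ico a b, f n‖ ≤ ((b - a) / m : ℕ) * B + ((b - a) % m : ℕ) * A := by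
  rcases le_total b a with hba | hab
  · simp [hba]
  obtain ⟨R, rfl⟩ := Nat.exists_eq_add_of_le hab
  have hq : a + m * (R / m) ≤ a + R := by gcongr; exact Nat.mul_div_le R m
  rw [add_tsub_cancel_left, ← sum_Ico_consecutive f le_self_add hq]
  refine norm_add_le_of_le (norm_sum_Ico_add_mul_le_of_norm_block_le hB _) ?_
  refine (norm_sum_le_of_le _ fun n hn => hA n (le_self_add.trans (mem_Ico.1 hn).1)).trans_eq ?_
  rw [sum_const, nsmul_eq_mul, Nat.card_Ico, Nat.add_sub_add_left, Nat.mod_eq_sub_mul_div]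

end BlockSums

lemma floor_natCast_mul_fract {R : Type*} [Ring R] [LinearOrder R] [IsStrictOrderedRing R]
    [FloorRing R] (n : ℕ) (x : R) : ⌊n * Int.fract x⌋ = ⌊n * x⌋ % n := by
  rcases eq_or_ne n 0 with rfl | hn
  · simp
  rw [Int.emod_def, Int.natCast_mul_floor_div_cancel hn, Int.fract, mul_sub,
    ← Int.floor_sub_intCast]
  push_cast
  rfl

lemma sum_range_pow_digits_length_le {b : ℕ} (hb : 2 ≤ b) (v : ℕ) :
    ∑ t ∈ range (Nat.digits b v).length, b ^ t ≤ 2 * v := by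
  rcases eq_or_ne v 0 with rfl | hv
  · simp
  rw [Nat.geomSum_eq hb]
  refine Nat.div_le_of_le_mul ?_
  calc b ^ (Nat.digits b v).length - 1 ≤ b * v :=
        (Nat.sub_le _ _).trans (Nat.base_pow_length_digits_le b v hb hv)
    _ ≤ ((b - 1) * 2) * v := by gcongr; omega
    _ = (b - 1) * (2 * v) := mul_assoc ..

lemma digits_length_le_self {b : ℕ} (hb : 2 ≤ b) (v : ℕ) : (Nat.digits b v).length ≤ v :=
  (Nat.digits_length_le_iff hb v).2 (Nat.lt_pow_self hb)

section DigitCount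

lemma T_zero : T 0 = 0 := rfl

lemma T_strictMono : StrictMono T :=
  strictMono_nat_of_lt_succ fun v => by
    rw [T_succ, lt_add_iff_pos_right, Nat.lt_digits_length_iff (by norm_num)]
    simp

lemma T_le_sq (v : ℕ) : T v ≤ v ^ 2 := by
  refine (sum_le_card_nsmul _ _ v fun j hj => ?_).trans_eq (by simp [sq])
  exact (digits_length_le_self (by norm_num) j).trans (mem_Icc.1 hj).2

lemma exists_T_le_lt (N : ℕ) : ∃ V, T V ≤ N ∧ N < T (V + 1) := by
  obtain ⟨V, hV, hV'⟩ := T_strictMono.exists_between_of_tendsto_atTop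
    T_strictMono.tendsto_atTop (x := N + 1) (by simp [T_zero])
  exact ⟨V, Nat.lt_succ_iff.1 hV, hV'⟩

/-- Positions are counted from `0`, so that `T y - (t + 1)` is the position of the digit of `y`
followed by exactly `t` further digits of `y`. -/
lemma sum_range_T {M : Type*} [AddCommMonoid M] (f : ℕ → M) (V : ℕ) :
    ∑ n ∈ range (T V), f n =
      ∑ y ∈ Icc 1 V, ∑ t ∈ range (Nat.digits 10 y).length, f (T y - (t + 1)) := by
  induction V with
  | zero => simp [T_zero]
  | succ V ih =>
    rw [sum_Icc_succ_top (by omega), ← ih, T_succ, sum_range_add,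
      ← sum_range_reflect (fun i => f (T V + i))]
    congr 1
    refine sum_congr rfl fun t ht => ?_
    rw [mem_range] at ht
    congr 1
    omega

lemma sum_range_T_comm {M : Type*} [AddCommMonoid M] (f : ℕ → M) (V : ℕ) :
    ∑ n ∈ range (T V), f n =
      ∑ t ∈ range (Nat.digits 10 V).length, ∑ y ∈ Ico (10 ^ t) (V + 1), f (T y - (t + 1)) := by
  rw [sum_range_T]
  refine sum_comm' fun y t => ?_
  have : 1 ≤ 10 ^ t := Nat.one_le_pow _ _ (by norm_num)
  simp only [mem_Icc, mem_Ico, mem_range, Nat.lt_digits_length_iff (b := 10) (by norm_num)]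
  omega

lemma mul_digits_length_le_T (V : ℕ) : V * (Nat.digits 10 V).length ≤ 3 * T V := by
  set L := (Nat.digits 10 V).length
  have hT : T V = ∑ t ∈ range L, (V + 1 - 10 ^ t) := by
    simpa only [sum_const, card_range, Nat.card_Ico, smul_eq_mul, mul_one] using
      sum_range_T_comm (fun _ => (1 : ℕ)) V
  calc V * L = ∑ _ ∈ range L, V := by simp [mul_comm]
    _ ≤ ∑ t ∈ range L, ((V + 1 - 10 ^ t) + 10 ^ t) := sum_le_sum fun t _ => by omega
    _ ≤ T V + 2 * V := by
      rw [sum_add_distrib, ← hT]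
      gcongr
      exact sum_range_pow_digits_length_le (by norm_num) V
    _ ≤ 3 * T V := by linarith [T_strictMono.le_apply (x := V)]

lemma log_le_digits_length_of_lt_T {N V : ℕ} (hN : 1 ≤ N) (hV : N < T (V + 1)) :
    Real.log N ≤ 2 * Real.log 10 * (Nat.digits 10 V).length := by
  set L := (Nat.digits 10 V).length
  have hNL : N ≤ 10 ^ (L * 2) :=
    calc N ≤ (V + 1) ^ 2 := hV.le.trans (T_le_sq _)
      _ ≤ (10 ^ L) ^ 2 := by gcongr; exact Nat.lt_base_pow_length_digits (by norm_num)
      _ = 10 ^ (L * 2) := (pow_mul ..).symm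
  calc Real.log N ≤ Real.log (10 ^ (L * 2)) := Real.log_le_log (mod_cast hN) (mod_cast hNL)
    _ = 2 * Real.log 10 * L := by rw [Real.log_pow]; push_cast; ring

end DigitCount

section Champernowne

/-- The integer `123…y` obtained by concatenating the decimal representations of `1, …, y`. -/
def champTrunc : ℕ → ℕ
  | 0 => 0
  | y + 1 => champTrunc y * 10 ^ (Nat.digits 10 (y + 1)).length + (y + 1)

lemma sum_range_div_pow_T (y : ℕ) :
    ∑ m ∈ range (y + 1), (m : ℝ) / 10 ^ T m = champTrunc y / 10 ^ T y := by
  induction y with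
  | zero => simp [champTrunc]
  | succ y ih =>
    rw [sum_range_succ, ih, champTrunc, T_succ, pow_add]
    push_cast
    field_simp

lemma champTrunc_mod_pow {y t : ℕ} (ht : t ≤ (Nat.digits 10 y).length) :
    champTrunc y % 10 ^ t = y % 10 ^ t := by
  cases y with
  | zero => rfl
  | succ y =>
    rw [champTrunc, Nat.add_mod,
      Nat.mod_eq_zero_of_dvd ((pow_dvd_pow 10 ht).mul_left _), zero_add, Nat.mod_mod]

lemma champTrunc_succ_add_one_div (y : ℕ) :
    ((champTrunc (y + 1) : ℝ) + 1) / 10 ^ T (y + 1) =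
      (champTrunc y + (y + 2 : ℕ) / (10 ^ (Nat.digits 10 (y + 1)).length : ℕ)) / 10 ^ T y := by
  rw [champTrunc, T_succ, pow_add]
  push_cast
  field_simp
  ring

lemma antitone_champTrunc_add_one_div :
    Antitone fun y => ((champTrunc y : ℝ) + 1) / 10 ^ T y := by
  refine antitone_nat_of_succ_le fun y => ?_
  rw [champTrunc_succ_add_one_div]
  gcongr
  exact div_le_one_of_le₀
    (mod_cast Nat.lt_base_pow_length_digits (b := 10) (m := y + 1) (by norm_num)) (by positivity)

/-- An odd `y` is not followed by a string of `9`s, the one case of equality. -/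
lemma champTrunc_succ_add_one_div_lt {y : ℕ} (hy : Odd y) :
    ((champTrunc (y + 1) : ℝ) + 1) / 10 ^ T (y + 1) < (champTrunc y + 1) / 10 ^ T y := by
  have hlen : (Nat.digits 10 (y + 1)).length ≠ 0 := by simp
  have hle : y + 2 ≤ 10 ^ (Nat.digits 10 (y + 1)).length :=
    Nat.lt_base_pow_length_digits (by norm_num)
  have hlt : y + 2 < 10 ^ (Nat.digits 10 (y + 1)).length := by
    refine hle.lt_of_ne fun h => ?_
    have heven : Even (y + 2) := h ▸ (show Even 10 by decide).pow_of_ne_zero hlen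
    exact Nat.not_even_iff_odd.2 (hy.add_even even_two) heven
  rw [champTrunc_succ_add_one_div]
  gcongr
  rw [div_lt_one (by positivity)]
  exact mod_cast hlt

lemma sum_range_div_pow_T_le (n y : ℕ) :
    ∑ m ∈ range n, (m : ℝ) / 10 ^ T m ≤ (champTrunc y + 1) / 10 ^ T y := by
  have hmono : Monotone fun n => ∑ m ∈ range n, (m : ℝ) / 10 ^ T m :=
    monotone_nat_of_le_succ fun n => by
      rw [sum_range_succ]
      exact le_add_of_nonneg_right (by positivity)
  refine hmono.forall_le_of_antitone antitone_champTrunc_add_one_div (fun z => ?_) n y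
  calc ∑ m ∈ range z, (m : ℝ) / 10 ^ T m ≤ ∑ m ∈ range (z + 1), (m : ℝ) / 10 ^ T m :=
        hmono z.le_succ
    _ = champTrunc z / 10 ^ T z := sum_range_div_pow_T z
    _ ≤ (champTrunc z + 1) / 10 ^ T z := by gcongr; linarith

lemma champTrunc_div_le_champ (y : ℕ) : champTrunc y / 10 ^ T y ≤ champ := by
  rw [← sum_range_div_pow_T]
  exact (summable_of_sum_range_le (fun m => by positivity)
    fun n => sum_range_div_pow_T_le n 0).sum_le_tsum _ fun m _ => by positivity

lemma champ_lt_champTrunc_add_one_div (y : ℕ) : champ < (champTrunc y + 1) / 10 ^ T y :=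
  calc champ ≤ (champTrunc (2 * y + 2) + 1) / 10 ^ T (2 * y + 2) :=
        Real.tsum_le_of_sum_range_le (fun m => by positivity) fun n => sum_range_div_pow_T_le n _
    _ < (champTrunc (2 * y + 1) + 1) / 10 ^ T (2 * y + 1) :=
        champTrunc_succ_add_one_div_lt (odd_two_mul_add_one y)
    _ ≤ (champTrunc y + 1) / 10 ^ T y := antitone_champTrunc_add_one_div (by omega)

lemma floor_pow_T_mul_champ (y : ℕ) : ⌊10 ^ T y * champ⌋ = champTrunc y := by
  have hpos : (0 : ℝ) < 10 ^ T y := by positivity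
  rw [Int.floor_eq_iff]
  exact ⟨(div_le_iff₀' hpos).1 (champTrunc_div_le_champ y),
    (lt_div_iff₀' hpos).1 (champ_lt_champTrunc_add_one_div y)⟩

lemma floor_pow_mul_fract_champ {y t : ℕ} (ht : t ≤ (Nat.digits 10 y).length) :
    ⌊10 ^ t * Int.fract (10 ^ (T y - t) * champ)⌋ = (y % 10 ^ t : ℕ) := by
  have htT : t ≤ T y := (ht.trans (digits_length_le_self (by norm_num) y)).trans
    T_strictMono.le_apply
  have h := floor_natCast_mul_fract (10 ^ t) (10 ^ (T y - t) * champ)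
  rw [Nat.cast_pow, Nat.cast_ofNat, ← mul_assoc, ← pow_add, Nat.add_sub_cancel' htT,
    floor_pow_T_mul_champ] at h
  rw [h, ← champTrunc_mod_pow ht, Int.natCast_mod]

end Champernowne

section Discrepancy

variable {γ : ℝ}

lemma norm_sum_centeredIndicator_champ_Ico_le (hγ : γ ∈ Set.Icc (0 : ℝ) 1) (t V : ℕ) :
    ‖∑ y ∈ Ico (10 ^ t) (V + 1), centeredIndicator γ (Int.fract (10 ^ (T y - (t + 1)) * champ))‖ ≤
      (V / 10 ^ (t + 1) + 10 ^ (t + 1) : ℕ) := by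
  set q := 10 ^ (t + 1) with hq
  have hblock : ∀ c, 10 ^ t ≤ c → ‖∑ y ∈ Ico c (c + q),
      centeredIndicator γ (Int.fract (10 ^ (T y - (t + 1)) * champ))‖ ≤ 1 := fun c hc => by
    refine norm_sum_centeredIndicator_le_one_of_bijOn hγ (bijOn_mod_Ico_range c q) fun y hy => ?_
    have hty : t < (Nat.digits 10 y).length :=
      (Nat.lt_digits_length_iff (by norm_num) y).2 (hc.trans (mem_Ico.1 hy).1)
    rw [hq, Nat.cast_pow, Nat.cast_ofNat]
    exact floor_pow_mul_fract_champ hty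
  refine (norm_sum_Ico_le_of_norm_block_le
    (fun y _ => norm_centeredIndicator_le_one hγ _) hblock _).trans ?_
  rw [mul_one, mul_one, ← Nat.cast_add, Nat.cast_le]
  gcongr
  · have : 1 ≤ 10 ^ t := Nat.one_le_pow _ _ (by norm_num)
    omega
  · exact (Nat.mod_lt _ (by positivity)).le

lemma norm_sum_centeredIndicator_champ_range_T_le (hγ : γ ∈ Set.Icc (0 : ℝ) 1) (V : ℕ) :
    ‖∑ n ∈ range (T V), centeredIndicator γ (Int.fract (10 ^ n * champ))‖ ≤ (22 * V : ℕ) := by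
  rw [sum_range_T_comm]
  refine (norm_sum_le_of_le _ fun t _ => norm_sum_centeredIndicator_champ_Ico_le hγ t V).trans ?_
  rw [← Nat.cast_sum, Nat.cast_le, sum_add_distrib]
  have hquot : ∑ t ∈ range (Nat.digits 10 V).length, V / 10 ^ (t + 1) ≤ 2 * V :=
    calc _ ≤ ∑ t ∈ range (Nat.digits 10 V).length, V / 10 ^ t := by
          gcongr <;> omega
      _ ≤ V * 10 / (10 - 1) := Nat.geom_sum_le (by norm_num) _ _
      _ ≤ 2 * V := by omega
  have hpow : ∑ t ∈ range (Nat.digits 10 V).length, 10 ^ (t + 1) ≤ 20 * V := by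
    simp_rw [pow_succ, ← sum_mul]
    have := sum_range_pow_digits_length_le (b := 10) (by norm_num) V
    omega
  omega

lemma norm_sum_centeredIndicator_champ_range_le (hγ : γ ∈ Set.Icc (0 : ℝ) 1) {N V : ℕ}
    (hV : T V ≤ N) (hN : N < T (V + 1)) :
    ‖∑ n ∈ range N, centeredIndicator γ (Int.fract (10 ^ n * champ))‖ ≤ (23 * V : ℕ) := by
  rw [← sum_range_add_sum_Ico _ hV]
  have hrest : N - T V ≤ V := by
    have := digits_length_le_self (b := 10) (by norm_num) (V + 1)
    rw [T_succ] at hN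
    omega
  calc _ ≤ ((22 * V : ℕ) : ℝ) + (N - T V : ℕ) := by
        refine norm_add_le_of_le (norm_sum_centeredIndicator_champ_range_T_le hγ V) ?_
        refine (norm_sum_le_of_le _ fun n _ => norm_centeredIndicator_le_one hγ _).trans_eq ?_
        simp
    _ ≤ (23 * V : ℕ) := mod_cast (by omega)

lemma norm_sum_centeredIndicator_champ_mul_log_le (hγ : γ ∈ Set.Icc (0 : ℝ) 1) {N : ℕ}
    (hN : 1 ≤ N) :
    ‖∑ n ∈ range N, centeredIndicator γ (Int.fract (10 ^ n * champ))‖ * Real.log N ≤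
      138 * Real.log 10 * N := by
  obtain ⟨V, hV, hV'⟩ := exists_T_le_lt N
  set L := (Nat.digits 10 V).length
  have hVL : V * L ≤ 3 * N := (mul_digits_length_le_T V).trans (by gcongr)
  calc _ ≤ (23 * V : ℕ) * (2 * Real.log 10 * L) := by
        gcongr
        · exact norm_sum_centeredIndicator_champ_range_le hγ hV hV'
        · exact log_le_digits_length_of_lt_T hN hV'
    _ = 46 * Real.log 10 * (V * L : ℕ) := by push_cast; ring
    _ ≤ 46 * Real.log 10 * (3 * N : ℕ) := by gcongr
    _ = 138 * Real.log 10 * N := by push_cast; ring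

end Discrepancy

theorem champ_prefix_interval_count_general :
    ∃ C : ℝ, 0 < C ∧ ∀ γ : ℝ, γ ∈ Set.Icc (0 : ℝ) 1 → ∀ N : ℕ, 2 ≤ N →
      |(((Finset.Icc 1 N).filter fun n =>
          Int.fract (10 ^ (n - 1) * champ) ∈ Set.Ico (0 : ℝ) γ).card : ℝ) / N
        - γ| ≤ C / Real.log N := by
  refine ⟨138 * Real.log 10, by positivity, fun γ hγ N hN => ?_⟩
  have hN0 : (0 : ℝ) < N := mod_cast (by omega : 0 < N)
  have hlog : 0 < Real.log N := Real.log_pos (mod_cast hN)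
  have hcount : ∑ n ∈ range N, centeredIndicator γ (Int.fract (10 ^ n * champ)) =
      #{n ∈ Icc 1 N | Int.fract (10 ^ (n - 1) * champ) ∈ Set.Ico 0 γ} - N * γ := by
    rw [range_eq_Ico, ← sum_Ico_add_right_sub_eq 0 N 1, zero_add, Ico_add_one_right_eq_Icc,
      sum_centeredIndicator_eq_card_sub, Nat.card_Icc, add_tsub_cancel_right]
    simp only [Set.mem_Ico, Int.fract_nonneg, true_and]
  rw [div_sub' hN0.ne', abs_div, Nat.abs_cast, div_le_div_iff₀ hN0 hlog, ← hcount]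
  exact norm_sum_centeredIndicator_champ_mul_log_le hγ (by omega)

/-- There is a constant `C > 0`, independent of `h` and of `γ`, such that for every
`h ≥ 1` there is a threshold `N₀` with: for every `γ ∈ [0,1)` with `10^h·γ ∈ ℤ` and
every `N ≥ N₀`, `|#{n ≤ N : 10^{n−1}c mod 1 ∈ [0, γ)}/N − γ| ≤ C/log N`. -/
theorem champ_prefix_interval_count :
    ∃ C : ℝ, 0 < C ∧ ∀ h : ℕ, 1 ≤ h → ∃ N₀ : ℕ, ∀ γ : ℝ, γ ∈ Set.Ico (0 : ℝ) 1 →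
      (∃ z : ℤ, (10 : ℝ) ^ h * γ = (z : ℝ)) → ∀ N : ℕ, N₀ ≤ N →
      |(((Finset.Icc 1 N).filter fun n =>
          Int.fract (10 ^ (n - 1) * champ) ∈ Set.Ico (0 : ℝ) γ).card : ℝ) / N
        - γ| ≤ C / Real.log N := by
  obtain ⟨C, hC, hbound⟩ := champ_prefix_interval_count_general
  exact ⟨C, hC, fun _ _ => ⟨2, fun γ hγ _ => hbound γ (Set.Ico_subset_Icc_self hγ)⟩⟩
end
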